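/- Let Λ : [0, ∞) → [0, ∞) be a continuous nondecreasing function with Λ(0) = 0, and let N = (N_t)_{t≥0} be an inhomogeneous Poisson process with mean function Λ (i.e., N has independent increments, cadlag paths, N_0 = 0, and N_t − N_s is Poisson distributed with parameter Λ(t) − Λ(s) for s ≤ t). Set X_t = N_t − Λ(t). Then for every n ≥ 1 the process M^(n)_t = Γ_n(X_t, −Λ(t), −Λ(t), …, −Λ(t)) (the Kendall polynomial with first argument X_t and all remaining n−1 arguments equal to −Λ(t)) is a martingale with respect to the natural filtration of X. -/

import Mathlib

open MeasureTheory ProbabilityTheory Filter Topology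
open scoped NNReal

/-- The Kendall polynomials `Γ_n`, expressing moments in terms of cumulants:
`Γ_0 = 1` and `Γ_{n+1}(x_1,…,x_{n+1}) = Σ_{j=0}^n C(n,j) Γ_j(x_1,…,x_j) x_{n+1-j}`.
The argument function `x : ℕ → ℝ` encodes the variables `x_1, x_2, …`
(only the values `x 1, …, x n` are used by `kendall n x`). -/
noncomputable def kendall : ℕ → (ℕ → ℝ) → ℝ
  | 0, _ => 1
  | n + 1, x =>
      ∑ j ∈ (Finset.range (n + 1)).attach,
        (n.choose j.1 : ℝ) * kendall j.1 x * x (n + 1 - j.1)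
decreasing_by exact Finset.mem_range.mp j.2

/-- A function `f : ℝ≥0 → ℝ` is cadlag: right-continuous with left limits. -/
def IsCadlag (f : ℝ≥0 → ℝ) : Prop :=
  (∀ t : ℝ≥0, ContinuousWithinAt f (Set.Ici t) t) ∧
    ∀ t : ℝ≥0, 0 < t → ∃ l : ℝ, Tendsto f (𝓝[<] t) (𝓝 l)

lemma kendall_zero' (x : ℕ → ℝ) : kendall 0 x = 1 := by
  rw [kendall]

lemma kendall_succ' (n : ℕ) (x : ℕ → ℝ) :
    kendall (n + 1) x =
      ∑ j ∈ Finset.range (n + 1), (n.choose j : ℝ) * kendall j x * x (n + 1 - j) := by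
  rw [kendall]
  exact Finset.sum_attach (Finset.range (n + 1))
    (fun j => (n.choose j : ℝ) * kendall j x * x (n + 1 - j))

/-- exponential generating series of the Kendall polynomials -/
noncomputable def kendallSeries (x : ℕ → ℝ) : PowerSeries ℝ :=
  PowerSeries.mk fun n => kendall n x / (n.factorial : ℝ)

/-- derivative of the cumulant series -/
noncomputable def cumSeries (x : ℕ → ℝ) : PowerSeries ℝ :=
  PowerSeries.mk fun n => x (n + 1) / (n.factorial : ℝ)

lemma choose_eq_div (n i j : ℕ) (h : i + j = n) :
    (n.choose i : ℝ) = n.factorial / (i.factorial * j.factorial) := by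
  subst h
  rw [Nat.choose_symm_add, Nat.add_choose, Nat.cast_div (Nat.factorial_mul_factorial_dvd_factorial_add i j)]
  · push_cast; rfl
  · positivity

lemma kendallSeries_deriv (x : ℕ → ℝ) :
    PowerSeries.derivative ℝ (kendallSeries x) = kendallSeries x * cumSeries x := by
  ext n
  rw [PowerSeries.coeff_derivative, PowerSeries.coeff_mul]
  simp only [kendallSeries, cumSeries, PowerSeries.coeff_mk]
  rw [kendall_succ', ← Finset.Nat.sum_antidiagonal_eq_sum_range_succ_mk
    (f := fun p : ℕ × ℕ => (n.choose p.1 : ℝ) * kendall p.1 x * x (n + 1 - p.1)),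
    Finset.sum_div, Finset.sum_mul]
  refine Finset.sum_congr rfl fun p hp => ?_
  have hp' := Finset.HasAntidiagonal.mem_antidiagonal.mp hp
  have e : n + 1 - p.1 = p.2 + 1 := by omega
  rw [choose_eq_div n p.1 p.2 hp', e, Nat.factorial_succ]
  push_cast
  field_simp

lemma series_unique (F : PowerSeries ℝ) (x : ℕ → ℝ) (h0 : PowerSeries.coeff 0 F = 1)
    (hF : PowerSeries.derivative ℝ F = F * cumSeries x) : F = kendallSeries x := by
  ext n
  induction n using Nat.strong_induction_on with
  | _ n ih =>
    rcases n with _ | n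
    · rw [h0]; simp [kendallSeries, kendall_zero']
    · have h1 := congrArg (PowerSeries.coeff n) hF
      have h2 := congrArg (PowerSeries.coeff n) (kendallSeries_deriv x)
      rw [PowerSeries.coeff_derivative, PowerSeries.coeff_mul] at h1 h2
      have : ∑ p ∈ Finset.HasAntidiagonal.antidiagonal n, PowerSeries.coeff p.1 F * PowerSeries.coeff p.2 (cumSeries x)
        = ∑ p ∈ Finset.HasAntidiagonal.antidiagonal n,
          PowerSeries.coeff p.1 (kendallSeries x) * PowerSeries.coeff p.2 (cumSeries x) := by
        refine Finset.sum_congr rfl fun p hp => ?_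
        have hp' := Finset.HasAntidiagonal.mem_antidiagonal.mp hp
        rw [ih p.1 (by omega)]
      rw [this, ← h2] at h1
      exact mul_right_cancel₀ (by positivity) h1

lemma kendall_add (n : ℕ) (x y z : ℕ → ℝ) (hz : ∀ k, z (k + 1) = x (k + 1) + y (k + 1)) :
    kendall n z = ∑ p ∈ Finset.HasAntidiagonal.antidiagonal n,
      (n.choose p.1 : ℝ) * (kendall p.1 x * kendall p.2 y) := by
  have hs : kendallSeries x * kendallSeries y = kendallSeries z := by
    refine series_unique _ z ?_ ?_
    · simp [kendallSeries, PowerSeries.coeff_mul, kendall_zero']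
    · have hc : cumSeries z = cumSeries x + cumSeries y := by
        ext n; simp [cumSeries, hz, add_div]
      rw [Derivation.leibniz, kendallSeries_deriv, kendallSeries_deriv, hc]
      simp only [smul_eq_mul]
      ring
  have h := congrArg (PowerSeries.coeff n) hs
  rw [PowerSeries.coeff_mul] at h
  simp only [kendallSeries, PowerSeries.coeff_mk] at h
  have hn : (n.factorial : ℝ) ≠ 0 := by positivity
  rw [eq_div_iff hn] at h
  rw [← h, Finset.sum_mul]
  refine Finset.sum_congr rfl fun p hp => ?_
  rw [choose_eq_div n p.1 p.2 (Finset.HasAntidiagonal.mem_antidiagonal.mp hp)]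
  field_simp

lemma kendall_single (n : ℕ) (c : ℝ) :
    kendall n (fun k => if k = 1 then c else 0) = c ^ n := by
  induction n with
  | zero => simp [kendall_zero']
  | succ n ih =>
    rw [kendall_succ', Finset.sum_range_succ, Finset.sum_eq_zero]
    · simp [ih, pow_succ]
    · intro j hj
      have := Finset.mem_range.mp hj
      rw [if_neg (by omega), mul_zero]

lemma kendall_const_zero (n : ℕ) (hn : n ≠ 0) (x : ℕ → ℝ) (hx : ∀ k, x k = 0) :
    kendall n x = 0 := by
  obtain ⟨m, rfl⟩ := Nat.exists_eq_succ_of_ne_zero hn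
  rw [Nat.succ_eq_add_one, kendall_succ']
  simp [hx]

lemma kendall_expand (n : ℕ) (a l : ℝ) :
    kendall n (fun k => if k = 1 then a - l else -l) = ∑ p ∈ Finset.HasAntidiagonal.antidiagonal n,
      (n.choose p.1 : ℝ) * (a ^ p.1 * kendall p.2 (fun _ => -l)) := by
  rw [kendall_add n (fun k => if k = 1 then a else 0) (fun _ => -l)]
  · simp only [kendall_single]
  · intro k; split_ifs <;> ring

lemma hasSum_poisson_moment (r : ℝ≥0) (n : ℕ) :
    HasSum (fun k : ℕ => Real.exp (-r) * (r : ℝ) ^ k / k.factorial * (k : ℝ) ^ n)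
      (kendall n (fun _ => (r : ℝ))) := by
  induction n using Nat.strong_induction_on with
  | _ n ih =>
    rcases n with _ | n
    · simpa [kendall_zero'] using hasSum_one_poissonMeasure r
    · rw [← hasSum_nat_add_iff' 1, kendall_succ']
      have := hasSum_sum (s := Finset.range (n + 1)) fun j hj =>
        ((ih j (by simpa using hj)).mul_left (n.choose j : ℝ)).mul_right (r : ℝ)
      convert! this using 1
      · ext k
        rw [← Finset.sum_mul]
        have e : ∑ i ∈ Finset.range (n + 1), (n.choose i : ℝ) *
            (Real.exp (-r) * (r : ℝ) ^ k / k.factorial * (k : ℝ) ^ i)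
            = Real.exp (-r) * (r : ℝ) ^ k / k.factorial * ((k : ℝ) + 1) ^ n := by
          rw [add_pow, Finset.mul_sum]
          refine Finset.sum_congr rfl fun i _ => ?_
          simp; ring
        rw [e, Nat.factorial_succ]
        push_cast
        field_simp
        ring
      · simp

lemma integrable_poisson_moment (r : ℝ≥0) (n : ℕ) :
    Integrable (fun k : ℕ => (k : ℝ) ^ n) (poissonMeasure r) := by
  rw [integrable_poissonMeasure_iff]
  simpa using (hasSum_poisson_moment r n).summable

lemma integral_poisson_moment (r : ℝ≥0) (n : ℕ) :
    ∫ k : ℕ, (k : ℝ) ^ n ∂(poissonMeasure r) = kendall n (fun _ => (r : ℝ)) := by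
  rw [integral_poissonMeasure]
  simpa using (hasSum_poisson_moment r n).tsum_eq

section incr
variable {Ω : Type*} {mΩ : MeasurableSpace Ω} {μ : Measure Ω} [IsProbabilityMeasure μ]
  {D : Ω → ℤ} {r : ℝ≥0}

lemma incr_integrable_pow (hD : Measurable D)
    (h : Measure.map D μ = (poissonMeasure r).map (fun k : ℕ => (k : ℤ))) (n : ℕ) :
    Integrable (fun ω => (D ω : ℝ) ^ n) μ := by
  have : Integrable (fun z : ℤ => (z : ℝ) ^ n) (Measure.map D μ) := by
    rw [h, integrable_map_measure .of_discrete .of_discrete]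
    simpa [Function.comp_def] using integrable_poisson_moment r n
  exact this.comp_measurable hD

lemma incr_integral_pow (hD : Measurable D)
    (h : Measure.map D μ = (poissonMeasure r).map (fun k : ℕ => (k : ℤ))) (n : ℕ) :
    ∫ ω, (D ω : ℝ) ^ n ∂μ = kendall n (fun _ => (r : ℝ)) := by
  rw [← integral_map (f := fun z : ℤ => (z : ℝ) ^ n) hD.aemeasurable .of_discrete, h,
    integral_map .of_discrete .of_discrete]
  simpa using integral_poisson_moment r n

lemma incr_integrable (hD : Measurable D)
    (h : Measure.map D μ = (poissonMeasure r).map (fun k : ℕ => (k : ℤ))) (n : ℕ) (l : ℝ) :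
    Integrable (fun ω => kendall n (fun k => if k = 1 then (D ω : ℝ) - l else -l)) μ := by
  simp only [kendall_expand]
  exact integrable_finsetSum _ fun p _ =>
    ((incr_integrable_pow hD h p.1).mul_const _).const_mul _

lemma incr_integral (hD : Measurable D)
    (h : Measure.map D μ = (poissonMeasure r).map (fun k : ℕ => (k : ℤ))) (n : ℕ) :
    ∫ ω, kendall n (fun k => if k = 1 then (D ω : ℝ) - r else -r) ∂μ = if n = 0 then 1 else 0 := by
  simp only [kendall_expand]
  rw [integral_finsetSum _ fun p _ =>
    ((incr_integrable_pow hD h p.1).mul_const _).const_mul _]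
  simp only [integral_const_mul, integral_mul_const, incr_integral_pow hD h]
  rw [← kendall_add n _ _ (fun _ => 0) (by simp)]
  split_ifs with hn
  · rw [hn, kendall_zero']
  · exact kendall_const_zero n hn _ (by simp)
end incr

/-- For a compensated inhomogeneous Poisson process `X_t = N_t - Λ(t)`, where `N` is an
inhomogeneous Poisson process with continuous nondecreasing mean function `Λ` (`Λ(0) = 0`),
the process `M^{(n)}_t = Γ_n(X_t, -Λ(t), …, -Λ(t))` is a martingale with respect to the
natural filtration, for every `n ≥ 1`. -/
theorem compensatedPoisson_kendall_martingale
    {Ω : Type*} {mΩ : MeasurableSpace Ω} (μ : Measure Ω) [IsProbabilityMeasure μ]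
    (Λ : ℝ≥0 → ℝ≥0) (hΛcont : Continuous Λ) (hΛmono : Monotone Λ) (hΛ0 : Λ 0 = 0)
    (N : ℝ≥0 → Ω → ℕ) (hN : ∀ t, Measurable (N t)) (hN0 : ∀ ω, N 0 ω = 0)
    (hcadlag : ∀ ω, IsCadlag fun t => (N t ω : ℝ))
    (hXmeas : ∀ t : ℝ≥0, StronglyMeasurable fun ω => (N t ω : ℝ) - (Λ t : ℝ))
    (hindep : ∀ s t : ℝ≥0, s ≤ t →
      Indep (MeasurableSpace.comap (fun ω => (N t ω : ℤ) - (N s ω : ℤ))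
          (inferInstance : MeasurableSpace ℤ))
        (MeasureTheory.Filtration.natural (fun t ω => (N t ω : ℝ) - (Λ t : ℝ)) hXmeas s) μ)
    (hpois : ∀ s t : ℝ≥0, s ≤ t →
      Measure.map (fun ω => (N t ω : ℤ) - (N s ω : ℤ)) μ =
        (poissonMeasure (Λ t - Λ s)).map (fun k : ℕ => (k : ℤ)))
    (n : ℕ) (hn : 1 ≤ n) :
    Martingale
      (fun t ω => kendall n fun k =>
        if k = 1 then (N t ω : ℝ) - (Λ t : ℝ) else -(Λ t : ℝ))
      (MeasureTheory.Filtration.natural (fun t ω => (N t ω : ℝ) - (Λ t : ℝ)) hXmeas) μ := by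
  set ℱ := MeasureTheory.Filtration.natural (fun t ω => (N t ω : ℝ) - (Λ t : ℝ)) hXmeas with hℱ
  have hDmeas : ∀ s t, Measurable (fun ω => (N t ω : ℤ) - (N s ω : ℤ)) := fun s t =>
    (Measurable.of_discrete.comp (hN t)).sub (Measurable.of_discrete.comp (hN s))
  have hadapt : ∀ m t, StronglyMeasurable[ℱ t] (fun ω => kendall m fun k =>
        if k = 1 then (N t ω : ℝ) - (Λ t : ℝ) else -(Λ t : ℝ)) := by
    intro m t
    have hX : StronglyMeasurable[ℱ t] (fun ω => (N t ω : ℝ) - (Λ t : ℝ)) :=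
      Filtration.stronglyAdapted_natural hXmeas t
    have hNt : StronglyMeasurable[ℱ t] (fun ω => (N t ω : ℝ)) := by
      simpa using hX.add_const (Λ t : ℝ)
    simp only [kendall_expand]
    exact Finset.stronglyMeasurable_fun_sum _ fun p _ =>
      ((hNt.pow p.1).mul_const _).const_mul _
  have hint : ∀ m t, Integrable (fun ω => kendall m fun k =>
        if k = 1 then (N t ω : ℝ) - (Λ t : ℝ) else -(Λ t : ℝ)) μ := by
    intro m t
    have := incr_integrable (hDmeas 0 t) (hpois 0 t zero_le) m (Λ t : ℝ)
    simpa [hN0] using this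
  refine ⟨fun t => hadapt n t, fun s t hst => ?_⟩
  set G : ℕ → Ω → ℝ := fun m ω => kendall m fun k =>
        if k = 1 then (N s ω : ℝ) - (Λ s : ℝ) else -(Λ s : ℝ) with hG
  set H : ℕ → Ω → ℝ := fun m ω => kendall m fun k =>
        if k = 1 then (((N t ω : ℤ) - (N s ω : ℤ) : ℤ) : ℝ) - ((Λ t - Λ s : ℝ≥0) : ℝ)
        else -((Λ t - Λ s : ℝ≥0) : ℝ) with hH
  have hHint : ∀ m, Integrable (H m) μ := fun m =>
    incr_integrable (hDmeas s t) (hpois s t hst) m _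
  have hHI : ∀ m, ∫ ω, H m ω ∂μ = if m = 0 then 1 else 0 := fun m =>
    incr_integral (hDmeas s t) (hpois s t hst) m
  have hHm : ∀ m, StronglyMeasurable[MeasurableSpace.comap
      (fun ω => (N t ω : ℤ) - (N s ω : ℤ)) (inferInstance : MeasurableSpace ℤ)] (H m) := fun m =>
    (StronglyMeasurable.of_discrete (f := fun z : ℤ => kendall m fun k =>
        if k = 1 then (z : ℝ) - ((Λ t - Λ s : ℝ≥0) : ℝ)
        else -((Λ t - Λ s : ℝ≥0) : ℝ))).comp_measurable (comap_measurable _)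
  have hind : ∀ i j, IndepFun (G i) (H j) μ := by
    intro i j
    refine (IndepFun_iff_Indep _ _ _).mpr ?_
    exact indep_of_indep_of_le_left (indep_of_indep_of_le_right (hindep s t hst).symm
      (hHm j).measurable.comap_le) (hadapt i s).measurable.comap_le
  have hGHint : ∀ i j, Integrable (G i * H j) μ := fun i j =>
    (hind i j).integrable_mul (hint i s) (hHint j)
  have hdecomp : (fun ω => kendall n fun k =>
        if k = 1 then (N t ω : ℝ) - (Λ t : ℝ) else -(Λ t : ℝ)) =
      ∑ p ∈ Finset.HasAntidiagonal.antidiagonal n, (n.choose p.1 : ℝ) • (G p.1 * H p.2) := by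
    ext ω
    simp only [Finset.sum_apply, Pi.smul_apply, Pi.mul_apply, smul_eq_mul]
    refine kendall_add n _ _ _ fun k => ?_
    have : ((Λ t - Λ s : ℝ≥0) : ℝ) = Λ t - Λ s := NNReal.coe_sub (hΛmono hst)
    rw [this]
    split_ifs <;> push_cast <;> ring
  have hcond : ∀ i j, μ[G i * H j | ℱ s] =ᵐ[μ] fun ω => G i ω * (if j = 0 then 1 else 0) := by
    intro i j
    have h1 := condExp_mul_of_stronglyMeasurable_left (hadapt i s) (hGHint i j) (hHint j)
    have h2 := condExp_indep_eq (hDmeas s t).comap_le (ℱ.le s) (hHm j) (hindep s t hst)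
    filter_upwards [h1, h2] with ω e1 e2
    rw [e1, Pi.mul_apply, e2, hHI]
  simp only []
  rw [hdecomp]
  have hsum := condExp_finsetSum (μ := μ) (s := Finset.HasAntidiagonal.antidiagonal n)
    (f := fun p => (n.choose p.1 : ℝ) • (G p.1 * H p.2))
    (fun p _ => (hGHint p.1 p.2).smul _) (ℱ s)
  have hall : ∀ᵐ ω ∂μ, ∀ p ∈ Finset.HasAntidiagonal.antidiagonal n,
      (μ[(n.choose p.1 : ℝ) • (G p.1 * H p.2) | ℱ s]) ω =
        (n.choose p.1 : ℝ) * (G p.1 ω * (if p.2 = 0 then 1 else 0)) := by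
    refine (Finset.eventually_all _).mpr fun p _ => ?_
    filter_upwards [hcond p.1 p.2, condExp_smul (n.choose p.1 : ℝ) (G p.1 * H p.2) (ℱ s)]
      with ω e1 e2
    rw [e2, Pi.smul_apply, e1, smul_eq_mul]
  filter_upwards [hsum, hall] with ω e1 e2
  rw [e1, Finset.sum_apply, Finset.sum_congr rfl e2, Finset.sum_eq_single (n, 0)]
  · simp [hG]
  · intro p hp hne
    have hp' := Finset.HasAntidiagonal.mem_antidiagonal.mp hp
    rw [if_neg, mul_zero, mul_zero]
    intro h
    exact hne (Prod.ext (by simp; omega) h)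
  · intro h; exact absurd (Finset.HasAntidiagonal.mem_antidiagonal.mpr (by simp)) h
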